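/- Let M : ℝ² → ℝ be smooth with all partial derivatives up to order 9 square-integrable on ℝ², and let Ω := {x=(x₁,x₂,x₃)∈ℝ³ : x₁ > M(x₂,x₃)}. There exists a constant C > 0 (depending only on M) such that for every twice continuously differentiable g : closure(Ω) → ℝ with ∫_Ω |∇^j g|² dx < ∞ for j = 0,1,2, one has sup_{x∈Ω} |g(x)| ≤ C ( ∑_{j=0}^{2} ∫_Ω |∇^j g|² dx )^{1/2}. -/

import Mathlib

/- STATEMENT 5: Sobolev embedding H²(Ω) ⊂ L^∞(Ω) on the perturbed half-space
Ω = {x ∈ ℝ³ : x₁ > M(x₂,x₃)}. -/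

noncomputable section

open MeasureTheory Real Set Filter

abbrev E3 : Type := EuclideanSpace ℝ (Fin 3)
abbrev E2 : Type := EuclideanSpace ℝ (Fin 2)

/-- Projection on the tangential variables `x' = (x₂, x₃)`. -/
def proj2 (x : E3) : E2 := (WithLp.equiv 2 (Fin 2 → ℝ)).symm ![x 1, x 2]

/-- The perturbed half-space `Ω = {x : x₁ > M(x₂,x₃)}`. -/
def Omg (M : E2 → ℝ) : Set E3 := {x : E3 | M (proj2 x) < x 0}


/-- Point of `ℝ³` with first coordinate `s` and tangential part `v`. -/
def mk3 (s : ℝ) (v : E2) : E3 := !₂[s, v 0, v 1]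

/-- Sum of squares of the derivatives up to order two. -/
def Sg {F : Type*} [NormedAddCommGroup F] [NormedSpace ℝ F] (g : E3 → F) (y : E3) : ℝ :=
  ‖g y‖ ^ 2 + ‖fderiv ℝ g y‖ ^ 2 + ‖fderiv ℝ (fderiv ℝ g) y‖ ^ 2

section
variable {F : Type*} [NormedAddCommGroup F] [NormedSpace ℝ F]

lemma Sg_nonneg (g : E3 → F) (y : E3) : 0 ≤ Sg g y := by unfold Sg; positivity

lemma Sg_eq (g : E3 → F) (y : E3) :
    Sg g y = ∑ j ∈ Finset.range 3, ‖iteratedFDeriv ℝ j g y‖ ^ 2 := by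
  have h2 : ‖iteratedFDeriv ℝ 2 g y‖ = ‖fderiv ℝ (fderiv ℝ g) y‖ := by
    rw [← norm_iteratedFDeriv_one, norm_iteratedFDeriv_fderiv]
  simp [Finset.sum_range_succ, Sg, h2, norm_iteratedFDeriv_one]

lemma cont_fderiv_sq {f : E3 → F} {U : Set E3} (hU : IsOpen U) (hf : ContDiffOn ℝ 1 f U) :
    ContinuousOn (fun y => ‖fderiv ℝ f y‖ ^ 2) U :=
  (hf.continuousOn_fderiv_of_isOpen hU le_rfl).norm.pow 2

lemma Sg_cont {g : E3 → F} {U : Set E3} (hU : IsOpen U) (hg : ContDiffOn ℝ 2 g U) :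
    ContinuousOn (Sg g) U := by
  have h1 : ContDiffOn ℝ 1 (fderiv ℝ g) U := hg.fderiv_of_isOpen hU (by norm_num)
  have c0 : ContinuousOn (fun y => ‖g y‖ ^ 2) U := hg.continuousOn.norm.pow 2
  have c1 := cont_fderiv_sq hU (hg.of_le (by norm_num))
  have c2 := cont_fderiv_sq hU h1
  exact (c0.add c1).add c2

lemma meas_ind {g : E3 → F} {U : Set E3} (hU : IsOpen U) (hg : ContDiffOn ℝ 2 g U) :
    Measurable (U.indicator (fun p => ENNReal.ofReal (Sg g p))) := by
  classical
  have h1 : ContinuousOn (fun p => ENNReal.ofReal (Sg g p)) U :=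
    ENNReal.continuous_ofReal.comp_continuousOn (Sg_cont hU hg)
  have h2 := h1.measurable_piecewise (g := fun _ => 0) continuousOn_const hU.measurableSet
  rw [← Set.piecewise_eq_indicator]
  exact h2

lemma one_dim [CompleteSpace F] {h h1 h2 : ℝ → F}
    (hd : ∀ t ∈ Icc (0:ℝ) 1, HasDerivAt h (h1 t) t)
    (hd1 : ∀ t ∈ Icc (0:ℝ) 1, HasDerivAt h1 (h2 t) t)
    (hc : ContinuousOn h2 (Icc 0 1)) :
    ‖h 0‖ ≤ ∫ t in (0:ℝ)..1, t * (2 * ‖h t‖ + 4 * ‖h1 t‖ + ‖h2 t‖) := by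
  have hch : ContinuousOn h (Icc 0 1) := fun t ht => (hd t ht).continuousAt.continuousWithinAt
  have hch1 : ContinuousOn h1 (Icc 0 1) := fun t ht => (hd1 t ht).continuousAt.continuousWithinAt
  set A : ℝ → F := fun t => t • ((-2 * (1 - t)) • h t + ((1 - t) ^ 2) • h1 t) - ((1 - t) ^ 2) • h t
  set A' : ℝ → F := fun t => t • ((2:ℝ) • h t + (-4 * (1 - t)) • h1 t + ((1 - t) ^ 2) • h2 t)
  have hA : ∀ t ∈ uIcc (0:ℝ) 1, HasDerivAt A (A' t) t := by
    intro t ht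
    rw [uIcc_of_le zero_le_one] at ht
    have e1 : HasDerivAt (fun t : ℝ => 1 - t) (-1) t := by
      simpa using (hasDerivAt_id t).const_sub 1
    have e2 : HasDerivAt (fun t : ℝ => -2 * (1 - t)) 2 t := by
      simpa using e1.const_mul (-2)
    have e3 : HasDerivAt (fun t : ℝ => (1 - t) ^ 2) (-2 * (1 - t)) t := by
      exact (e1.fun_pow 2).congr_deriv (by simp)
    have := ((hasDerivAt_id t).smul ((e2.smul (hd t ht)).add (e3.smul (hd1 t ht)))).sub
      (e3.smul (hd t ht))
    refine HasDerivAt.congr_deriv (f := A) this ?_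
    simp only [A', id, Pi.add_apply, Pi.smul_apply']
    module
  have hcA : ContinuousOn A' (Icc 0 1) := by
    simp only [A']; fun_prop
  have key := intervalIntegral.integral_eq_sub_of_hasDerivAt hA
    (hcA.intervalIntegrable_of_Icc zero_le_one)
  have : A 1 - A 0 = h 0 := by simp [A]
  rw [this] at key
  rw [← key]
  refine (intervalIntegral.norm_integral_le_integral_norm zero_le_one).trans ?_
  refine intervalIntegral.integral_mono_on zero_le_one
    (hcA.norm.intervalIntegrable_of_Icc zero_le_one)
    (ContinuousOn.intervalIntegrable_of_Icc zero_le_one (by fun_prop)) ?_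
  intro t ht
  simp only [A']
  rw [norm_smul, Real.norm_of_nonneg ht.1]
  refine mul_le_mul_of_nonneg_left ?_ ht.1
  have b1 : |1 - t| ≤ 1 := by rw [abs_le]; constructor <;> linarith [ht.1, ht.2]
  refine (norm_add₃_le).trans ?_
  simp only [norm_smul, Real.norm_eq_abs, abs_mul, abs_pow]
  have b2 : |1 - t| ^ 2 ≤ 1 := pow_le_one₀ (abs_nonneg _) b1
  norm_num
  have := mul_le_mul_of_nonneg_right b1 (norm_nonneg (h1 t))
  have := mul_le_mul_of_nonneg_right b2 (norm_nonneg (h2 t))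
  rw [sq_abs] at this
  nlinarith

lemma jensen {f : ℝ → ℝ} (hf : ContinuousOn f (Icc 0 1)) :
    (∫ t in (0:ℝ)..1, f t) ^ 2 ≤ ∫ t in (0:ℝ)..1, f t ^ 2 := by
  set c := ∫ t in (0:ℝ)..1, f t with hc
  have h0 : 0 ≤ ∫ t in (0:ℝ)..1, (f t - c) ^ 2 :=
    intervalIntegral.integral_nonneg zero_le_one fun t _ => sq_nonneg _
  have i1 : IntervalIntegrable f volume 0 1 := hf.intervalIntegrable_of_Icc zero_le_one
  have i2 : IntervalIntegrable (fun t => f t ^ 2) volume 0 1 :=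
    (hf.pow 2).intervalIntegrable_of_Icc zero_le_one
  have : ∫ t in (0:ℝ)..1, (f t - c) ^ 2
      = (∫ t in (0:ℝ)..1, f t ^ 2) - 2 * c * (∫ t in (0:ℝ)..1, f t) + c ^ 2 := by
    have e : ∀ t, (f t - c) ^ 2 = (f t ^ 2 - 2 * c * f t) + c ^ 2 := fun t => by ring
    simp_rw [e]
    rw [intervalIntegral.integral_add (i2.sub (i1.const_mul _)) (by simp),
      intervalIntegral.integral_sub i2 (i1.const_mul _), intervalIntegral.integral_const_mul]
    simp
  rw [this, ← hc] at h0
  nlinarith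

lemma seg_est [CompleteSpace F] {g : E3 → F} {U : Set E3} (hU : IsOpen U)
    (hg : ContDiffOn ℝ 2 g U) {x v : E3} (hv : ‖v‖ ≤ 2)
    (hseg : ∀ t ∈ Icc (0:ℝ) 1, x + t • v ∈ U) :
    ENNReal.ofReal (‖g x‖ ^ 2) ≤
      84 * ∫⁻ t in Ioc (0:ℝ) 1, ENNReal.ofReal (t ^ 2) * ENNReal.ofReal (Sg g (x + t • v)) := by
  have g1 : ContDiffOn ℝ 1 (fderiv ℝ g) U := hg.fderiv_of_isOpen hU (by norm_num)
  have g2 : ContDiffOn ℝ 0 (fderiv ℝ (fderiv ℝ g)) U := g1.fderiv_of_isOpen hU (by norm_num)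
  have hl : ∀ t : ℝ, HasDerivAt (fun t : ℝ => x + t • v) v t := fun t => by
    simpa using ((hasDerivAt_id t).smul_const v).const_add x
  have hlc : ContinuousOn (fun t : ℝ => x + t • v) (Icc 0 1) := by fun_prop
  have d0 : ∀ t ∈ Icc (0:ℝ) 1, HasDerivAt (fun t => g (x + t • v)) (fderiv ℝ g (x + t • v) v) t := by
    intro t ht
    have := ((hg.differentiableOn (by norm_num)).differentiableAt
      (hU.mem_nhds (hseg t ht))).hasFDerivAt
    exact this.comp_hasDerivAt t (hl t)
  have d1 : ∀ t ∈ Icc (0:ℝ) 1, HasDerivAt (fun t => fderiv ℝ g (x + t • v) v)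
      (fderiv ℝ (fderiv ℝ g) (x + t • v) v v) t := by
    intro t ht
    have := ((g1.differentiableOn (by norm_num)).differentiableAt
      (hU.mem_nhds (hseg t ht))).hasFDerivAt
    have := this.comp_hasDerivAt t (hl t)
    simpa using this.clm_apply (hasDerivAt_const t v)
  have c0 : ContinuousOn (fun t : ℝ => g (x + t • v)) (Icc 0 1) :=
    fun t ht => (d0 t ht).continuousAt.continuousWithinAt
  have c1 : ContinuousOn (fun t : ℝ => fderiv ℝ g (x + t • v) v) (Icc 0 1) :=
    fun t ht => (d1 t ht).continuousAt.continuousWithinAt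
  have c2 : ContinuousOn (fun t : ℝ => fderiv ℝ (fderiv ℝ g) (x + t • v) v v) (Icc 0 1) := by
    have := g2.continuousOn.comp hlc hseg
    exact (this.clm_apply continuousOn_const).clm_apply continuousOn_const
  have cS : ContinuousOn (fun t : ℝ => t ^ 2 * Sg g (x + t • v)) (Icc 0 1) :=
    (continuousOn_id.pow 2).mul ((Sg_cont hU hg).comp hlc hseg)
  have h1 := one_dim d0 d1 c2
  have cf : ContinuousOn (fun t : ℝ => t * (2 * ‖g (x + t • v)‖ + 4 * ‖fderiv ℝ g (x + t • v) v‖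
    + ‖fderiv ℝ (fderiv ℝ g) (x + t • v) v v‖)) (Icc 0 1) :=
    continuousOn_id.mul (((c0.norm.const_mul _).add (c1.norm.const_mul _)).add c2.norm)
  have h2 := jensen cf
  have h3 : ‖g x‖ ^ 2 ≤ ∫ t in (0:ℝ)..1, 84 * (t ^ 2 * Sg g (x + t • v)) := by
    calc ‖g x‖ ^ 2 ≤ _ := by
          refine pow_le_pow_left₀ (norm_nonneg _) ?_ 2
          simpa using h1
      _ ≤ _ := h2
      _ ≤ _ := by
        refine intervalIntegral.integral_mono_on zero_le_one
          ((cf.pow 2).intervalIntegrable_of_Icc zero_le_one)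
          ((cS.const_mul _).intervalIntegrable_of_Icc zero_le_one) ?_
        intro t ht
        have n1 : ‖fderiv ℝ g (x + t • v) v‖ ≤ ‖fderiv ℝ g (x + t • v)‖ * 2 :=
          (ContinuousLinearMap.le_opNorm _ _).trans (by gcongr)
        have n2 : ‖fderiv ℝ (fderiv ℝ g) (x + t • v) v v‖
            ≤ ‖fderiv ℝ (fderiv ℝ g) (x + t • v)‖ * 2 * 2 :=
          (ContinuousLinearMap.le_opNorm₂ _ _ _).trans (by gcongr)
        rw [mul_pow, mul_left_comm]
        refine mul_le_mul_of_nonneg_left ?_ (sq_nonneg t)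
        unfold Sg
        set a := ‖g (x + t • v)‖
        set b := ‖fderiv ℝ g (x + t • v)‖
        set c := ‖fderiv ℝ (fderiv ℝ g) (x + t • v)‖
        calc _ ≤ (2 * a + 4 * (b * 2) + c * 2 * 2) ^ 2 := by gcongr
          _ ≤ _ := by
            nlinarith [sq_nonneg (4 * a - b), sq_nonneg (2 * a - c), sq_nonneg (b - 2 * c)]
  rw [intervalIntegral.integral_const_mul] at h3
  refine (ENNReal.ofReal_le_ofReal h3).trans ?_
  rw [ENNReal.ofReal_mul (by norm_num), intervalIntegral.integral_of_le zero_le_one,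
    ofReal_integral_eq_lintegral_ofReal
      ((cS.integrableOn_Icc).mono_set Ioc_subset_Icc_self)
      (ae_of_all _ fun t => mul_nonneg (sq_nonneg t) (Sg_nonneg _ _))]
  simp [ENNReal.ofReal_mul, sq_nonneg]

end

lemma mk3_mp : MeasurePreserving (fun p : ℝ × E2 => mk3 p.1 p.2) := by
  have h1 : MeasurePreserving (fun p : ℝ × E2 => (p.1, WithLp.ofLp p.2))
      volume (volume : Measure (ℝ × (Fin 2 → ℝ))) :=
    (MeasurePreserving.id volume).prod (PiLp.volume_preserving_ofLp (Fin 2))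
  have h2 := (volume_preserving_piFinSuccAbove (fun _ : Fin 3 => ℝ) 0).symm
  have h3 := (PiLp.volume_preserving_toLp (Fin 3)).comp (h2.comp h1)
  have e : (fun p : ℝ × E2 => mk3 p.1 p.2) = WithLp.toLp 2 ∘
      (MeasurableEquiv.piFinSuccAbove (fun _ : Fin 3 => ℝ) 0).symm ∘
        fun p : ℝ × E2 => (p.1, WithLp.ofLp p.2) := by
    funext p
    ext i
    fin_cases i <;> rfl
  rw [e]
  exact h3

lemma mk3_cont : Continuous (fun p : ℝ × E2 => mk3 p.1 p.2) := by
  unfold mk3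
  refine (PiLp.continuous_toLp 2 _).comp ?_
  refine continuous_pi fun i => ?_
  fin_cases i <;> simp <;> fun_prop

lemma norm_mk3_le {w : E2} (hw : ‖w‖ ≤ 1) : ‖mk3 1 w‖ ≤ 2 := by
  have h1 : ‖w‖ ^ 2 ≤ 1 := pow_le_one₀ (norm_nonneg _) hw
  have h2 : ‖mk3 1 w‖ ^ 2 = 1 + ‖w‖ ^ 2 := by
    simp [EuclideanSpace.norm_sq_eq, Fin.sum_univ_succ, mk3]
  nlinarith [norm_nonneg (mk3 1 w)]

lemma scale_int {H : E2 → ENNReal} (hH : Measurable H) (y : E2) {t : ℝ} (ht : 0 < t) :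
    ENNReal.ofReal (t ^ 2) * ∫⁻ w, H (y + t • w) = ∫⁻ z, H z := by
  have h1 : ∫⁻ w : E2, H (y + t • w)
      = ∫⁻ z, H (y + z) ∂(Measure.map (fun w : E2 => t • w) volume) := by
    rw [lintegral_map (by fun_prop) (by fun_prop)]
  rw [h1, Measure.map_addHaar_smul _ ht.ne', lintegral_smul_measure,
    lintegral_add_left_eq_self]
  simp only [finrank_euclideanSpace, Fintype.card_fin, smul_eq_mul]
  rw [← mul_assoc, ← ENNReal.ofReal_mul (by positivity), abs_of_pos (by positivity),
    mul_inv_cancel₀ (by positivity)]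
  simp

lemma core {F : Type*} [NormedAddCommGroup F] [NormedSpace ℝ F] [CompleteSpace F]
    {g : E3 → F} {U : Set E3} (hU : IsOpen U)
    (hg : ContDiffOn ℝ 2 g U) {s : ℝ} {y : E2} {a : ℝ} (ha : a ≤ 1)
    (hseg : ∀ t ∈ Icc (0:ℝ) 1, ∀ w ∈ Metric.ball (0:E2) a, mk3 (s + t) (y + t • w) ∈ U) :
    volume (Metric.ball (0:E2) a) * ENNReal.ofReal (‖g (mk3 s y)‖ ^ 2) ≤
      84 * ∫⁻ t in Ioc (0:ℝ) 1, ∫⁻ z : E2,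
        U.indicator (fun p => ENNReal.ofReal (Sg g p)) (mk3 (s + t) z) := by
  set H : E3 → ENNReal := U.indicator (fun p => ENNReal.ofReal (Sg g p)) with hH
  have mH : Measurable H := meas_ind hU hg
  have hadd : ∀ (t : ℝ) (w : E2), mk3 s y + t • mk3 1 w = mk3 (s + t) (y + t • w) := by
    intro t w
    ext i
    fin_cases i <;> simp [mk3]
  have mJ : Measurable (fun q : E2 × ℝ =>
      ENNReal.ofReal (q.2 ^ 2) * H (mk3 (s + q.2) (y + q.2 • q.1))) := by
    refine Measurable.mul (by fun_prop) (mH.comp ?_)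
    have : Continuous (fun q : E2 × ℝ => ((s + q.2, y + q.2 • q.1) : ℝ × E2)) := by fun_prop
    exact (mk3_cont.comp this).measurable
  calc volume (Metric.ball (0:E2) a) * ENNReal.ofReal (‖g (mk3 s y)‖ ^ 2)
      = ∫⁻ w in Metric.ball (0:E2) a, ENNReal.ofReal (‖g (mk3 s y)‖ ^ 2) := by
        rw [setLIntegral_const, mul_comm]
    _ ≤ ∫⁻ w in Metric.ball (0:E2) a, 84 * ∫⁻ t in Ioc (0:ℝ) 1,
          ENNReal.ofReal (t ^ 2) * H (mk3 (s + t) (y + t • w)) := by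
        refine setLIntegral_mono' Metric.isOpen_ball.measurableSet fun w hw => ?_
        have hw1 : ‖w‖ ≤ 1 := by
          have := mem_ball_zero_iff.1 hw; linarith
        refine (seg_est hU hg (norm_mk3_le hw1) (x := mk3 s y) ?_).trans ?_
        · intro t ht; rw [hadd]; exact hseg t ht w hw
        · gcongr 84 * ?_
          refine setLIntegral_mono' measurableSet_Ioc fun t ht => ?_
          rw [hadd, hH, indicator_of_mem (hseg t ⟨ht.1.le, ht.2⟩ w hw)]
    _ ≤ ∫⁻ w : E2, 84 * ∫⁻ t in Ioc (0:ℝ) 1,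
          ENNReal.ofReal (t ^ 2) * H (mk3 (s + t) (y + t • w)) := setLIntegral_le_lintegral _ _
    _ = 84 * ∫⁻ w : E2, ∫⁻ t in Ioc (0:ℝ) 1,
          ENNReal.ofReal (t ^ 2) * H (mk3 (s + t) (y + t • w)) := by
        rw [lintegral_const_mul' _ _ (by simp)]
    _ = 84 * ∫⁻ t in Ioc (0:ℝ) 1, ∫⁻ w : E2,
          ENNReal.ofReal (t ^ 2) * H (mk3 (s + t) (y + t • w)) := by
        rw [lintegral_lintegral_swap mJ.aemeasurable]
    _ = _ := by
        congr 1
        refine setLIntegral_congr_fun measurableSet_Ioc fun t ht => ?_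
        have mt : Measurable (fun z : E2 => H (mk3 (s + t) z)) :=
          mH.comp (mk3_cont.comp (by fun_prop : Continuous fun z : E2 => (s + t, z))).measurable
        rw [lintegral_const_mul' _ _ (by simp)]
        exact scale_int mt y ht.1

/-- `proj2` as a continuous linear map. -/
def proj2L : E3 →L[ℝ] E2 :=
  LinearMap.toContinuousLinearMap
    { toFun := proj2
      map_add' := fun x y => by ext i; fin_cases i <;> simp [proj2]
      map_smul' := fun c x => by ext i; fin_cases i <;> simp [proj2] }

lemma proj2L_apply (x : E3) : proj2L x = proj2 x := rfl

lemma proj2_mk3 (s : ℝ) (v : E2) : proj2 (mk3 s v) = v := by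
  ext i; fin_cases i <;> simp [proj2, mk3]

lemma mk3_eta (x : E3) : mk3 (x 0) (proj2 x) = x := by
  ext i; fin_cases i <;> simp [proj2, mk3]

lemma proj2L_norm : ‖proj2L‖ ≤ 1 := by
  refine ContinuousLinearMap.opNorm_le_bound _ zero_le_one fun x => ?_
  rw [one_mul, proj2L_apply]
  refine (sq_le_sq₀ (norm_nonneg _) (norm_nonneg _)).1 ?_
  simp [EuclideanSpace.norm_sq_eq, Fin.sum_univ_succ, proj2]
  nlinarith [sq_nonneg (x 0)]

lemma grad_bound (M : E2 → ℝ) (hM : ContDiff ℝ (⊤ : ℕ∞) M)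
    (hMint : ∀ j ≤ 9, Integrable fun x' : E2 => ‖iteratedFDeriv ℝ j M x'‖ ^ 2) :
    ∃ L : ℝ, 0 ≤ L ∧ ∀ y, ‖fderiv ℝ M y‖ ≤ L := by
  have hf : ContDiff ℝ 2 (fderiv ℝ M) := (contDiff_infty.1 hM 3).fderiv_right (by norm_num)
  have hg : ContDiff ℝ 2 (fderiv ℝ M ∘ proj2L) := hf.comp proj2L.contDiff
  set T : E2 → ℝ := fun z => ∑ j ∈ Finset.range 3, ‖iteratedFDeriv ℝ (j + 1) M z‖ ^ 2 with hT
  have hTi : Integrable T := integrable_finsetSum _ fun j hj => hMint (j + 1) (by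
    have := Finset.mem_range.1 hj; omega)
  have hTf : ∫⁻ z, ENNReal.ofReal (T z) < ⊤ := by
    have := hTi.lintegral_lt_top
    exact this
  have hle : ∀ t z, Sg (fderiv ℝ M ∘ proj2L) (mk3 t z) ≤ T z := by
    intro t z
    rw [Sg_eq]
    refine Finset.sum_le_sum fun j hj => ?_
    have hj3 := Finset.mem_range.1 hj
    refine pow_le_pow_left₀ (norm_nonneg _) ?_ 2
    rw [proj2L.iteratedFDeriv_comp_right hf _ (by exact_mod_cast (by omega : j ≤ 2)),
      ← norm_iteratedFDeriv_fderiv, proj2L_apply, proj2_mk3]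
    refine (ContinuousMultilinearMap.norm_compContinuousLinearMap_le _ _).trans ?_
    refine mul_le_of_le_one_right (norm_nonneg _) ?_
    exact Finset.prod_le_one (fun _ _ => norm_nonneg _) fun _ _ => proj2L_norm
  set V := volume (Metric.ball (0:E2) 1)
  have hV0 : V ≠ 0 := (Metric.measure_ball_pos volume _ one_pos).ne'
  have hVt : V ≠ ⊤ := measure_ball_lt_top.ne
  set B : ENNReal := 84 * (∫⁻ z, ENNReal.ofReal (T z)) / V with hB
  have hBt : B ≠ ⊤ := ENNReal.div_ne_top (ENNReal.mul_ne_top (by simp) hTf.ne) hV0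
  refine ⟨√B.toReal, Real.sqrt_nonneg _, fun y => ?_⟩
  have h := core isOpen_univ hg.contDiffOn (s := 0) (y := y) (a := 1) le_rfl
    (fun _ _ _ _ => mem_univ _)
  have h2 : ENNReal.ofReal (‖fderiv ℝ M y‖ ^ 2) ≤ B := by
    rw [hB, ENNReal.le_div_iff_mul_le (Or.inl hV0) (Or.inl hVt), mul_comm]
    simp only [Function.comp, proj2L_apply, proj2_mk3] at h
    refine h.trans ?_
    gcongr 84 * ?_
    calc _ ≤ ∫⁻ t in Ioc (0:ℝ) 1, ∫⁻ z, ENNReal.ofReal (T z) := by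
          refine lintegral_mono fun t => lintegral_mono fun z => ?_
          rw [indicator_univ]
          exact ENNReal.ofReal_le_ofReal (hle _ _)
      _ = _ := by simp
  exact Real.le_sqrt_of_sq_le ((ENNReal.ofReal_le_iff_le_toReal hBt).1 h2)

lemma isOpen_Omg {M : E2 → ℝ} (hM : Continuous M) : IsOpen (Omg M) := by
  have : Continuous proj2 := proj2L.continuous
  exact isOpen_lt (hM.comp this) (by fun_prop)

theorem sobolev_Linfty_embedding (M : E2 → ℝ) (hM : ContDiff ℝ (⊤ : ℕ∞) M)
    (hMint : ∀ j ≤ 9, Integrable fun x' : E2 => ‖iteratedFDeriv ℝ j M x'‖ ^ 2) :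
    ∃ C : ℝ, 0 < C ∧
      ∀ g : E3 → ℝ, ContDiffOn ℝ 2 g (closure (Omg M)) →
        (∀ j ≤ 2, IntegrableOn (fun x => ‖iteratedFDeriv ℝ j g x‖ ^ 2) (Omg M)) →
        ∀ x ∈ Omg M,
          |g x| ≤ C * Real.sqrt
            (∑ j ∈ Finset.range 3, ∫ y in Omg M, ‖iteratedFDeriv ℝ j g y‖ ^ 2) := by
  obtain ⟨L, hL0, hL⟩ := grad_bound M hM hMint
  have hopen : IsOpen (Omg M) := isOpen_Omg hM.continuous
  set a : ℝ := 1 / (L + 1) with ha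
  have ha0 : 0 < a := by positivity
  have ha1 : a ≤ 1 := by rw [ha, div_le_one (by positivity)]; linarith
  have hLa : L * a ≤ 1 := by
    rw [ha, mul_one_div, div_le_one (by positivity)]; linarith
  set V := volume (Metric.ball (0:E2) a)
  have hV0 : V ≠ 0 := (Metric.measure_ball_pos volume _ ha0).ne'
  have hVt : V ≠ ⊤ := measure_ball_lt_top.ne
  have hVr : 0 < V.toReal := ENNReal.toReal_pos hV0 hVt
  refine ⟨√(84 / V.toReal), by positivity, fun g hg hgi x hx => ?_⟩
  have hgO : ContDiffOn ℝ 2 g (Omg M) := hg.mono subset_closure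
  have hx' : M (proj2 x) < x 0 := hx
  have h := core hopen hgO (s := x 0) (y := proj2 x) ha1 (by
    intro t ht w hw
    have hw' := mem_ball_zero_iff.1 hw
    change M (proj2 (mk3 _ _)) < (mk3 _ _ : E3) 0
    rw [proj2_mk3]
    have e : (mk3 (x 0 + t) (proj2 x + t • w) : E3) 0 = x 0 + t := by simp [mk3]
    rw [e]
    have h1 := convex_univ.norm_image_sub_le_of_norm_fderiv_le (𝕜 := ℝ) (f := M)
      (fun y _ => hM.differentiable (by simp) y) (fun y _ => hL y)
      (mem_univ (proj2 x)) (mem_univ (proj2 x + t • w))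
    rw [add_sub_cancel_left, norm_smul, Real.norm_of_nonneg ht.1, Real.norm_eq_abs] at h1
    have h2 := le_abs_self (M (proj2 x + t • w) - M (proj2 x))
    have h3 : L * (t * ‖w‖) ≤ t := by
      calc L * (t * ‖w‖) ≤ L * (t * a) := by have := ht.1; gcongr
        _ = t * (L * a) := by ring
        _ ≤ t * 1 := mul_le_mul_of_nonneg_left hLa ht.1
        _ = t := mul_one t
    linarith)
  rw [mk3_eta] at h
  set I := ∑ j ∈ Finset.range 3, ∫ y in Omg M, ‖iteratedFDeriv ℝ j g y‖ ^ 2 with hI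
  have hI0 : 0 ≤ I := Finset.sum_nonneg fun j _ => integral_nonneg fun y => sq_nonneg _
  have hSi : IntegrableOn (Sg g) (Omg M) := by
    have : Sg g = fun y => ∑ j ∈ Finset.range 3, ‖iteratedFDeriv ℝ j g y‖ ^ 2 :=
      funext (Sg_eq g)
    rw [this]
    exact integrable_finsetSum _ fun j hj => hgi j (by
      have := Finset.mem_range.1 hj; omega)
  have hSI : ∫ y in Omg M, Sg g y = I := by
    simp_rw [Sg_eq]
    exact integral_finsetSum _ fun j hj => hgi j (by
      have := Finset.mem_range.1 hj; omega)
  set H : E3 → ENNReal := (Omg M).indicator (fun p => ENNReal.ofReal (Sg g p)) with hH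
  have mH : Measurable H := meas_ind hopen hgO
  have hfin : ∫⁻ t in Ioc (0:ℝ) 1, ∫⁻ z : E2, H (mk3 (x 0 + t) z) ≤ ENNReal.ofReal I := by
    calc _ ≤ ∫⁻ t : ℝ, ∫⁻ z : E2, H (mk3 (x 0 + t) z) := setLIntegral_le_lintegral _ _
      _ = ∫⁻ t : ℝ, ∫⁻ z : E2, H (mk3 t z) :=
        lintegral_add_left_eq_self (fun t => ∫⁻ z : E2, H (mk3 t z)) (x 0)
      _ = ∫⁻ p : ℝ × E2, H (mk3 p.1 p.2) :=
        (lintegral_prod (fun p : ℝ × E2 => H (mk3 p.1 p.2))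
          (mH.comp mk3_cont.measurable).aemeasurable).symm
      _ = ∫⁻ p, H p := mk3_mp.lintegral_comp mH
      _ = ∫⁻ p in Omg M, ENNReal.ofReal (Sg g p) := lintegral_indicator hopen.measurableSet _
      _ = ENNReal.ofReal I := by
        rw [← hSI, ofReal_integral_eq_lintegral_ofReal hSi (ae_of_all _ fun y => Sg_nonneg g y)]
      _ ≤ _ := le_rfl
  have h4 : V * ENNReal.ofReal (‖g x‖ ^ 2) ≤ 84 * ENNReal.ofReal I :=
    h.trans (by gcongr)
  have h5 : V.toReal * ‖g x‖ ^ 2 ≤ 84 * I := by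
    have := ENNReal.toReal_mono (ENNReal.mul_ne_top (by simp) (by simp)) h4
    simpa [ENNReal.toReal_mul, ENNReal.toReal_ofReal hI0, ENNReal.toReal_ofReal,
      sq_nonneg] using this
  rw [← Real.sqrt_mul (by positivity)]
  refine Real.le_sqrt_of_sq_le ?_
  rw [div_mul_eq_mul_div, le_div_iff₀ hVr, mul_comm]
  exact h5
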